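/- arXiv:1908.06794 — 2 statements merged into one kernel-verified Lean document; each statement's English description precedes it below -/
import Mathlib

section
/- Let n ≥ 2, 1 < k ≤ n, and let a ∈ ℝ^{n+1} \ {0}. For a continuous function f on S^n the following are equivalent: (i) ∫_{S^n ∩ ζ} f dH^{k−1} = 0 for every k-dimensional affine plane ζ parallel to the vector a and meeting the open unit ball B^{n+1}; (ii) f(R_a x) = −f(x) for every x ∈ S^n. -/
open MeasureTheory Metric Matrix
open scoped InnerProductSpace ENNReal

/-- `Euc m` is the Euclidean space `ℝ^m`. -/
abbrev Euc (m : ℕ) : Type := EuclideanSpace ℝ (Fin m)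

/-- The Möbius transformation `φ_b x = (b − P_b x − s_b Q_b x)/(1 − x·b)`,
where `P_b x = ((b·x)/|b|²) b`, `Q_b x = x − P_b x`, `s_b = √(1 − |b|²)`. -/
noncomputable def phiMap {n : ℕ} (b x : Euc (n + 1)) : Euc (n + 1) :=
  (1 - ⟪x, b⟫_ℝ)⁻¹ •
    (b - (⟪b, x⟫_ℝ / ‖b‖ ^ 2) • b -
      Real.sqrt (1 - ‖b‖ ^ 2) • (x - (⟪b, x⟫_ℝ / ‖b‖ ^ 2) • b))

/-- `a* = a/|a|²`, the inversion of `a` in the unit sphere. -/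
noncomputable def aStar {n : ℕ} (a : Euc (n + 1)) : Euc (n + 1) := (‖a‖ ^ 2)⁻¹ • a

/-- `s_{a*} = √(1 − |a*|²)`. -/
noncomputable def sStar {n : ℕ} (a : Euc (n + 1)) : ℝ := Real.sqrt (1 - ‖aStar a‖ ^ 2)

/-- The reflection `R_a x = x − 2((x·a)/|a|²) a` in the hyperplane `a^⊥`. -/
noncomputable def reflMap {n : ℕ} (a x : Euc (n + 1)) : Euc (n + 1) :=
  x - ((2 * ⟪x, a⟫_ℝ) / ‖a‖ ^ 2) • a

/-- `τ_a x = ((|a|² − 1) x + 2(1 − x·a) a)/|x − a|²`, the second point at which the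
line through `a` and `x` meets the unit sphere. -/
noncomputable def tauMap {n : ℕ} (a x : Euc (n + 1)) : Euc (n + 1) :=
  (‖x - a‖ ^ 2)⁻¹ • ((‖a‖ ^ 2 - 1) • x + (2 * (1 - ⟪x, a⟫_ℝ)) • a)

/-!
Write `P` for the orthogonal projection to a `k`-dimensional subspace `V ∋ a`. Averaging a function
over the slice through `x` parallel to `V`, and then over `x` in the sphere, returns a
constant multiple of its integral over the sphere: the slices are scaled copies of the unit sphere
of `V`, and on `V` the characteristic function of its surface measure depends only on the norm;
since `‖‖P x‖ • P t‖ = ‖‖P t‖ • P x‖`, the points `x` and `t` can be exchanged in the characteristic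
function of the average.

Let the slice integrals of `f` vanish. A character `x ↦ exp (i⟪x, w⟫)` with `w ⊥ a` is constant on
the slices parallel to a suitable `V ⊆ w^⊥` containing `a`, so the Fourier transform of `f` times
the surface measure vanishes on `a^⊥`. Hence this signed measure has zero image under the
projection to `a^⊥` and annihilates every function of that projection, that is, every continuous
function invariant under the reflection `R` in `a^⊥`. Since `R` preserves the surface measure,
`f + f ∘ R` is orthogonal to itself, hence zero.
-/

section Reflection

variable {E : Type*} [NormedAddCommGroup E] [InnerProductSpace ℝ E]

lemma reflection_mem_affineSubspace_iff {ζ : AffineSubspace ℝ E} {v : E} (hv : v ∈ ζ.direction)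
    {x : E} : (ℝ ∙ v)ᗮ.reflection x ∈ ζ ↔ x ∈ ζ := by
  have reflection_mem : ∀ y ∈ ζ, (ℝ ∙ v)ᗮ.reflection y ∈ ζ := by
    intro y hy
    have hmem := (ℝ ∙ v)ᗮ.sub_starProjection_mem_orthogonal y
    rw [Submodule.orthogonal_orthogonal] at hmem
    have hdir : -(2 : ℝ) • (y - (ℝ ∙ v)ᗮ.starProjection y) ∈ ζ.direction :=
      ζ.direction.smul_mem _ ((Submodule.span_singleton_le_iff_mem _ _).2 hv hmem)
    convert AffineSubspace.vadd_mem_of_mem_direction hdir hy using 1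
    rw [Submodule.reflection_apply, vadd_eq_add]
    module
  refine ⟨fun h => ?_, reflection_mem x⟩
  simpa only [Submodule.reflection_reflection] using reflection_mem _ h

variable [FiniteDimensional ℝ E]

lemma isClosed_sphere_inter_affineSubspace (ζ : AffineSubspace ℝ E) :
    IsClosed (sphere (0 : E) 1 ∩ ζ) :=
  isClosed_sphere.inter ζ.closed_of_finiteDimensional

variable [MeasurableSpace E] [BorelSpace E]

lemma measurePreserving_reflection_restrict_sphere_inter {ζ : AffineSubspace ℝ E} {v : E}
    (hv : v ∈ ζ.direction) (s : ℝ) :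
    MeasurePreserving (ℝ ∙ v)ᗮ.reflection ((μH[s] : Measure E).restrict (sphere 0 1 ∩ ζ))
      ((μH[s] : Measure E).restrict (sphere 0 1 ∩ ζ)) := by
  have hpre : (ℝ ∙ v)ᗮ.reflection ⁻¹' (sphere 0 1 ∩ ζ) = sphere (0 : E) 1 ∩ ζ := by
    ext x
    simp [reflection_mem_affineSubspace_iff hv]
  have hmp := ((ℝ ∙ v)ᗮ.reflection.toIsometryEquiv.measurePreserving_hausdorffMeasure
    s).restrict_preimage (isClosed_sphere_inter_affineSubspace ζ).measurableSet
  rwa [LinearIsometryEquiv.coe_toIsometryEquiv, hpre] at hmp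

end Reflection

section Hemisphere

open scoped BoundedContinuousFunction

variable {E : Type*} [NormedAddCommGroup E] [InnerProductSpace ℝ E]

/-- The parametrization of the closed unit hemisphere centred at the unit vector `p` by the closed
unit ball of `p^⊥`: the graph of `√(1 - ‖u‖²)` in the direction of `p`. -/
noncomputable def hemisphereGraph (p u : E) : E := u + √(1 - ‖u‖ ^ 2) • p

lemma continuous_hemisphereGraph (p : E) : Continuous (hemisphereGraph p) := by
  unfold hemisphereGraph; fun_prop

lemma contDiffAt_hemisphereGraph_zero (p : E) : ContDiffAt ℝ 1 (hemisphereGraph p) 0 := by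
  refine contDiffAt_id.add (ContDiffAt.smul (ContDiffAt.sqrt ?_ (by simp)) contDiffAt_const)
  exact contDiffAt_const.sub (contDiff_norm_sq ℝ).contDiffAt

variable {p : E}

lemma norm_hemisphereGraph (hp : ‖p‖ = 1) {u : E} (hu : u ∈ (ℝ ∙ p)ᗮ) (hu1 : ‖u‖ ≤ 1) :
    ‖hemisphereGraph p u‖ = 1 := by
  have hpu : ⟪u, p⟫_ℝ = 0 := (Submodule.mem_orthogonal_singleton_iff_inner_left).1 hu
  have hsq : 0 ≤ 1 - ‖u‖ ^ 2 := by nlinarith [norm_nonneg u]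
  have : ‖hemisphereGraph p u‖ ^ 2 = 1 := by
    rw [hemisphereGraph, norm_add_sq_real, inner_smul_right, hpu, norm_smul, hp, mul_one,
      Real.norm_of_nonneg (Real.sqrt_nonneg _), Real.sq_sqrt hsq]
    ring
  exact (pow_eq_one_iff_of_nonneg (norm_nonneg _) two_ne_zero).1 this

lemma starProjection_orthogonal_unit (hp : ‖p‖ = 1) (x : E) :
    (ℝ ∙ p)ᗮ.starProjection x = x - ⟪p, x⟫_ℝ • p := by
  rw [Submodule.starProjection_orthogonal', _root_.sub_apply,
    Submodule.starProjection_unit_singleton ℝ hp]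
  rfl

lemma hemisphereGraph_starProjection (hp : ‖p‖ = 1) {x : E} (hx : ‖x‖ = 1)
    (hpx : 0 ≤ ⟪p, x⟫_ℝ) : hemisphereGraph p ((ℝ ∙ p)ᗮ.starProjection x) = x := by
  have hheight : 1 - ‖x - ⟪p, x⟫_ℝ • p‖ ^ 2 = ⟪p, x⟫_ℝ ^ 2 := by
    rw [norm_sub_sq_real, norm_smul, inner_smul_right, real_inner_comm, hx, hp, Real.norm_eq_abs,
      mul_one, sq_abs]
    ring
  rw [starProjection_orthogonal_unit hp, hemisphereGraph, hheight, Real.sqrt_sq hpx,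
    sub_add_cancel]

lemma starProjection_hemisphereGraph {U : Submodule ℝ E} [U.HasOrthogonalProjection]
    (hU : U ≤ (ℝ ∙ p)ᗮ) {u : E} (hu : u ∈ U) : U.starProjection (hemisphereGraph p u) = u := by
  have hp : p ∈ Uᗮ := fun v hv => (Submodule.mem_orthogonal_singleton_iff_inner_left).1 (hU hv)
  rw [hemisphereGraph, map_add, map_smul, Submodule.starProjection_eq_self_iff.2 hu,
    (Submodule.starProjection_apply_eq_zero_iff U).2 hp, smul_zero, add_zero]

lemma exists_boundedContinuous_comp_starProjection_eq {Y : Type*} [PseudoMetricSpace Y] {a : E}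
    {G : E →ᵇ Y} (hG : ∀ x, G ((ℝ ∙ a)ᗮ.reflection x) = G x) :
    ∃ g : E →ᵇ Y, ∀ x, ‖x‖ = 1 → g ((ℝ ∙ a)ᗮ.starProjection x) = G x := by
  rcases eq_or_ne a 0 with rfl | ha
  · exact ⟨G, fun x _ => by
      simp only [Submodule.span_zero_singleton, Submodule.bot_orthogonal_eq_top,
        Submodule.starProjection_top, ContinuousLinearMap.id_apply]⟩
  set p := ‖a‖⁻¹ • a
  have hp1 : ‖p‖ = 1 := norm_smul_inv_norm (𝕜 := ℝ) ha
  have hspan : ℝ ∙ p = ℝ ∙ a :=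
    Submodule.span_singleton_smul_eq (IsUnit.mk0 _ (inv_ne_zero (norm_ne_zero_iff.2 ha))) a
  simp_rw [← hspan] at hG ⊢
  have eq_of_inner_nonneg : ∀ x, ‖x‖ = 1 → 0 ≤ ⟪p, x⟫_ℝ →
      G (hemisphereGraph p ((ℝ ∙ p)ᗮ.starProjection x)) = G x := fun x hx hpx => by
    rw [hemisphereGraph_starProjection hp1 hx hpx]
  refine ⟨G.compContinuous ⟨_, continuous_hemisphereGraph p⟩, fun x hx => ?_⟩
  change G (hemisphereGraph p _) = G x
  rcases le_total 0 ⟪p, x⟫_ℝ with hpx | hpx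
  · exact eq_of_inner_nonneg x hx hpx
  · set R := (ℝ ∙ p)ᗮ.reflection with hR
    have hRp : R p = -p := Submodule.reflection_orthogonalComplement_singleton_eq_neg p
    have hpRx : ⟪p, R x⟫_ℝ = -⟪p, x⟫_ℝ := by
      rw [← R.inner_map_map p x, hRp, inner_neg_left, neg_neg]
    have hQR : (ℝ ∙ p)ᗮ.starProjection (R x) = (ℝ ∙ p)ᗮ.starProjection x := by
      rw [hR, Submodule.reflection_apply, map_sub, map_nsmul,
        Submodule.starProjection_eq_self_iff.2 (Submodule.starProjection_apply_mem _ x), two_nsmul,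
        add_sub_cancel_right]
    rw [← hQR, eq_of_inner_nonneg (R x) ((R.norm_map x).trans hx) (by linarith), hG]

end Hemisphere

section Dimension

lemma exists_submodule_between {K M : Type*} [DivisionRing K] [AddCommGroup M] [Module K M]
    [FiniteDimensional K M] {A B : Submodule K M} (hAB : A ≤ B) {k : ℕ}
    (hA : Module.finrank K A ≤ k) (hB : k ≤ Module.finrank K B) :
    ∃ V : Submodule K M, A ≤ V ∧ V ≤ B ∧ Module.finrank K V = k := by
  induction k, hA using Nat.le_induction with
  | base => exact ⟨A, le_rfl, hAB, rfl⟩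
  | succ m _ ih =>
    obtain ⟨V, hAV, hVB, hV⟩ := ih (by omega)
    have hlt : V < B := lt_of_le_of_ne hVB (by rintro rfl; omega)
    obtain ⟨x, hxB, hxV⟩ := SetLike.exists_of_lt hlt
    refine ⟨V ⊔ K ∙ x, hAV.trans le_sup_left,
      sup_le hVB ((Submodule.span_singleton_le_iff_mem _ _).2 hxB), ?_⟩
    rw [Submodule.finrank_sup_span_singleton hxV, hV]

lemma finrank_inf_orthogonal_singleton_add_one {E : Type*} [NormedAddCommGroup E]
    [InnerProductSpace ℝ E] {V : Submodule ℝ E} [FiniteDimensional ℝ V] {p : E} (hpV : p ∈ V)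
    (hp : p ≠ 0) :
    Module.finrank ℝ (V ⊓ (ℝ ∙ p)ᗮ : Submodule ℝ E) + 1 = Module.finrank ℝ V := by
  have hsum := Submodule.finrank_add_inf_finrank_orthogonal (K₁ := ℝ ∙ p) (K₂ := V)
    ((Submodule.span_singleton_le_iff_mem _ _).2 hpV)
  rw [finrank_span_singleton hp, inf_comm] at hsum
  omega

end Dimension

section SphereMeasure

variable {E : Type*} [NormedAddCommGroup E] [InnerProductSpace ℝ E] [FiniteDimensional ℝ E]
  [MeasurableSpace E] [BorelSpace E]

/-- The surface measure of the unit sphere of the subspace `V`, as a measure on the ambient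
space: Hausdorff measure of dimension `dim V - 1` restricted to the unit sphere of `V`. -/
noncomputable def sphereMeasure (V : Submodule ℝ E) : Measure E :=
  (μH[(Module.finrank ℝ V : ℝ) - 1]).restrict (sphere 0 1 ∩ V)

lemma ae_sphereMeasure (V : Submodule ℝ E) : ∀ᵐ y ∂sphereMeasure V, y ∈ V ∧ ‖y‖ = 1 := by
  have hmeas := (isClosed_sphere_inter_affineSubspace V.toAffineSubspace).measurableSet
  filter_upwards [ae_restrict_mem hmeas] with y hy
  exact ⟨hy.2, mem_sphere_zero_iff_norm.1 hy.1⟩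

lemma measurePreserving_reflection_sphereMeasure {V : Submodule ℝ E} {v : E} (hv : v ∈ V) :
    MeasurePreserving (ℝ ∙ v)ᗮ.reflection (sphereMeasure V) (sphereMeasure V) :=
  measurePreserving_reflection_restrict_sphere_inter (ζ := V.toAffineSubspace) (by simpa using hv) _

lemma exists_mem_nhdsWithin_sphere_hausdorffMeasure_lt_top (V : Submodule ℝ E) {p : E}
    (hp : p ∈ sphere (0 : E) 1 ∩ V) :
    ∃ s ∈ nhdsWithin p (sphere 0 1 ∩ V), μH[(Module.finrank ℝ V : ℝ) - 1] s < ∞ := by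
  have hp1 : ‖p‖ = 1 := mem_sphere_zero_iff_norm.1 hp.1
  set U : Submodule ℝ E := V ⊓ (ℝ ∙ p)ᗮ
  have hdim : (Module.finrank ℝ V : ℝ) - 1 = Module.finrank ℝ U :=
    sub_eq_iff_eq_add.2 <| mod_cast
      (finrank_inf_orthogonal_singleton_add_one hp.2 (norm_ne_zero_iff.1 (by simp [hp1]))).symm
  have hsmooth : ContDiffAt ℝ 1 (fun u : U => hemisphereGraph p u) 0 :=
    (contDiffAt_hemisphereGraph_zero p).comp (0 : U) U.subtypeL.contDiff.contDiffAt
  obtain ⟨K, t, ht, hK⟩ := hsmooth.exists_lipschitzOnWith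
  obtain ⟨ρ, hρ, hρt⟩ := Metric.mem_nhds_iff.1 ht
  refine ⟨(fun u : U => hemisphereGraph p u) '' ball 0 ρ, ?_, ?_⟩
  · have hnear : ∀ᶠ x in nhds p, (ℝ ∙ p)ᗮ.starProjection x ∈ ball 0 ρ := by
      refine (ContinuousLinearMap.continuous _).continuousAt.eventually_mem ?_
      rw [starProjection_orthogonal_unit hp1, real_inner_self_eq_norm_sq, hp1]
      simpa using ball_mem_nhds (0 : E) hρ
    have hside : ∀ᶠ x in nhds p, 0 < ⟪p, x⟫_ℝ :=
      (by fun_prop : ContinuousAt (fun x : E => ⟪p, x⟫_ℝ) p).eventually_const_lt (by simp [hp1])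
    filter_upwards [mem_nhdsWithin_of_mem_nhds hnear, mem_nhdsWithin_of_mem_nhds hside,
      self_mem_nhdsWithin] with x hxρ hpx hx
    have hxU : (ℝ ∙ p)ᗮ.starProjection x ∈ U := by
      refine ⟨?_, Submodule.starProjection_apply_mem _ x⟩
      rw [starProjection_orthogonal_unit hp1]
      exact V.sub_mem hx.2 (V.smul_mem _ hp.2)
    refine ⟨⟨_, hxU⟩, by simpa using hxρ, ?_⟩
    exact hemisphereGraph_starProjection hp1 (mem_sphere_zero_iff_norm.1 hx.1) (le_of_lt hpx)
  · rw [hdim]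
    refine ((hK.mono hρt).hausdorffMeasure_image_le (by positivity)).trans_lt ?_
    exact ENNReal.mul_lt_top (ENNReal.rpow_lt_top_of_nonneg (by positivity) (by simp))
      measure_ball_lt_top

instance isFiniteMeasure_sphereMeasure (V : Submodule ℝ E) :
    IsFiniteMeasure (sphereMeasure V) := by
  have hcompact : IsCompact (sphere (0 : E) 1 ∩ V) :=
    (isCompact_sphere _ _).inter_right V.closed_of_finiteDimensional
  rw [sphereMeasure, isFiniteMeasure_restrict]
  exact (hcompact.measure_lt_top_of_nhdsWithin fun p hp =>
    exists_mem_nhdsWithin_sphere_hausdorffMeasure_lt_top V hp).ne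

lemma sphereMeasure_ne_zero_of_isOpen {V : Submodule ℝ E} {O : Set E} (hO : IsOpen O) {p : E}
    (hpO : p ∈ O) (hpV : p ∈ V) (hp : ‖p‖ = 1) : sphereMeasure V O ≠ 0 := by
  set U : Submodule ℝ E := V ⊓ (ℝ ∙ p)ᗮ
  have hdim : (Module.finrank ℝ V : ℝ) - 1 = Module.finrank ℝ U :=
    sub_eq_iff_eq_add.2 <| mod_cast
      (finrank_inf_orthogonal_singleton_add_one hpV (norm_ne_zero_iff.1 (by simp [hp]))).symm
  set W : Set U := ball 0 1 ∩ (fun u : U => hemisphereGraph p u) ⁻¹' O with hW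
  have hWopen : IsOpen W :=
    isOpen_ball.inter (hO.preimage ((continuous_hemisphereGraph p).comp continuous_subtype_val))
  have hW0 : (0 : U) ∈ W := by simp [hW, hemisphereGraph, hpO]
  have hshadow : W ⊆ U.orthogonalProjectionOnto '' (O ∩ (sphere 0 1 ∩ V)) := by
    rintro u ⟨hu, huO⟩
    have hu1 : ‖(u : E)‖ ≤ 1 := by simpa using (mem_ball_zero_iff.1 hu).le
    refine ⟨hemisphereGraph p u, ⟨huO, ?_, ?_⟩, Subtype.ext ?_⟩
    · simpa using norm_hemisphereGraph hp u.2.2 hu1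
    · exact V.add_mem u.2.1 (V.smul_mem _ hpV)
    · exact starProjection_hemisphereGraph inf_le_right u.2
  have hlip := U.lipschitzWith_orthogonalProjectionOnto.hausdorffMeasure_image_le
    (d := Module.finrank ℝ U) (by positivity) (O ∩ (sphere 0 1 ∩ V))
  intro h0
  rw [sphereMeasure, Measure.restrict_apply hO.measurableSet, hdim] at h0
  rw [h0, mul_zero] at hlip
  exact (hWopen.measure_pos μH[Module.finrank ℝ U] ⟨0, hW0⟩).ne'
    (le_antisymm ((measure_mono hshadow).trans hlip) zero_le)

lemma sphereMeasure_univ_ne_zero {V : Submodule ℝ E} (hV : V ≠ ⊥) :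
    sphereMeasure V Set.univ ≠ 0 := by
  have : Nontrivial V := Submodule.nontrivial_iff_ne_bot.2 hV
  obtain ⟨p, hp⟩ := exists_norm_eq V zero_le_one
  exact sphereMeasure_ne_zero_of_isOpen isOpen_univ (Set.mem_univ _) p.2 hp

lemma eqOn_sphere_of_ae_eq {Y : Type*} [TopologicalSpace Y] [T2Space Y] {V : Submodule ℝ E}
    {f g : E → Y} (hf : Continuous f) (hg : Continuous g) (h : f =ᵐ[sphereMeasure V] g) :
    Set.EqOn f g (sphere 0 1 ∩ V) := by
  intro x hx
  by_contra hne
  exact sphereMeasure_ne_zero_of_isOpen (isOpen_ne_fun hf hg) hne hx.2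
    (mem_sphere_zero_iff_norm.1 hx.1) (ae_iff.1 h)

lemma sphereMeasure_submodule_eq_zero {V W : Submodule ℝ E}
    (h : Module.finrank ℝ W + 1 < Module.finrank ℝ V) : sphereMeasure V W = 0 := by
  refine Measure.absolutelyContinuous_of_le Measure.restrict_le_self ?_
  have hdim : (Module.finrank ℝ W : ℝ) < (Module.finrank ℝ V : ℝ) - 1 := by
    rw [lt_sub_iff_add_lt]; exact_mod_cast h
  have := W.subtypeₗᵢ.isometry.hausdorffMeasure_image (d := (Module.finrank ℝ V : ℝ) - 1)
    (Or.inl (by linarith [(Module.finrank ℝ W).cast_nonneg (α := ℝ)])) Set.univ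
  rw [Real.hausdorffMeasure_of_finrank_lt hdim] at this
  simpa using this

end SphereMeasure

section Averaging

open scoped BoundedContinuousFunction

lemma charFun_eq_of_measurePreserving_reflection {E : Type*} [NormedAddCommGroup E]
    [InnerProductSpace ℝ E] [MeasurableSpace E] [BorelSpace E] {V : Submodule ℝ E} {μ : Measure E}
    (hμ : ∀ v ∈ V, MeasurePreserving (ℝ ∙ v)ᗮ.reflection μ μ) {s t : E} (hs : s ∈ V) (ht : t ∈ V)
    (hst : ‖s‖ = ‖t‖) : charFun μ s = charFun μ t := by
  set R := (ℝ ∙ (s - t))ᗮ.reflection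
  have hR : R s = t := Submodule.reflection_sub hst
  have hμR : MeasurePreserving R μ μ := hμ _ (V.sub_mem hs ht)
  rw [eq_comm, charFun_apply, charFun_apply, ← hR,
    ← hμR.integral_comp R.toHomeomorph.measurableEmbedding]
  simp_rw [R.inner_map_map]

variable {E : Type*} [NormedAddCommGroup E] [InnerProductSpace ℝ E]

/-- For `y` running over the unit sphere of `V`, the points `sliceMap V x y` run over the slice
through `x`, parallel to `V`, of the sphere of radius `‖x‖` centred at the origin. -/
noncomputable def sliceMap (V : Submodule ℝ E) [V.HasOrthogonalProjection] (x y : E) : E :=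
  ‖V.starProjection x‖ • y + (x - V.starProjection x)

variable {V : Submodule ℝ E} [V.HasOrthogonalProjection]

lemma continuous_sliceMap : Continuous fun z : E × E => sliceMap V z.1 z.2 := by
  unfold sliceMap; fun_prop

lemma inner_sliceMap {y : E} (hy : y ∈ V) (x t : E) :
    ⟪sliceMap V x y, t⟫_ℝ = ⟪y, ‖V.starProjection x‖ • V.starProjection t⟫_ℝ +
      ⟪x - V.starProjection x, t - V.starProjection t⟫_ℝ := by
  have hyt : ⟪y, V.starProjection t⟫_ℝ = ⟪y, t⟫_ℝ := by
    rw [← Submodule.inner_starProjection_left_eq_right, Submodule.starProjection_eq_self_iff.2 hy]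
  rw [sliceMap, inner_add_left, real_inner_smul_left, real_inner_smul_right, hyt,
    inner_sub_right (x - _), Submodule.starProjection_inner_eq_zero x _
      (Submodule.starProjection_apply_mem V t), sub_zero]

lemma norm_sliceMap_sq {y : E} (hy : y ∈ V) (x : E) :
    ‖sliceMap V x y‖ ^ 2 = ‖V.starProjection x‖ ^ 2 * ‖y‖ ^ 2 + ‖x - V.starProjection x‖ ^ 2 := by
  have hperp : ⟪‖V.starProjection x‖ • y, x - V.starProjection x⟫_ℝ = 0 := by
    rw [real_inner_comm]
    exact Submodule.starProjection_inner_eq_zero x _ (V.smul_mem _ hy)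
  rw [sliceMap, norm_add_sq_real, hperp, norm_smul, norm_norm]
  ring

lemma norm_sliceMap {y : E} (hy : y ∈ V) (hy1 : ‖y‖ = 1) (x : E) : ‖sliceMap V x y‖ = ‖x‖ := by
  refine (sq_eq_sq₀ (norm_nonneg _) (norm_nonneg _)).1 ?_
  rw [norm_sliceMap_sq hy, hy1, V.norm_sq_eq_add_norm_sq_starProjection x,
    Submodule.starProjection_orthogonal_val]
  ring

lemma norm_sub_starProjection_lt_one {x : E}
    (hx1 : ‖x‖ = 1) (hx : V.starProjection x ≠ 0) : ‖x - V.starProjection x‖ < 1 := by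
  have hpyth := V.norm_sq_eq_add_norm_sq_starProjection x
  rw [Submodule.starProjection_orthogonal_val, hx1] at hpyth
  exact (sq_lt_one_iff₀ (norm_nonneg _)).1 (by nlinarith [norm_pos_iff.2 hx])

lemma sliceMap_mem_mk'_iff {x y : E} (hx : V.starProjection x ≠ 0) :
    sliceMap V x y ∈ AffineSubspace.mk' x V ↔ y ∈ V := by
  have hshift : sliceMap V x y - x = ‖V.starProjection x‖ • y - V.starProjection x := by
    rw [sliceMap]; abel
  rw [AffineSubspace.mem_mk', vsub_eq_sub, hshift,
    V.sub_mem_iff_left (Submodule.starProjection_apply_mem V x),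
    V.smul_mem_iff (norm_ne_zero_iff.2 hx)]

lemma sliceMap_preimage_sphere_inter {x : E} (hx1 : ‖x‖ = 1) (hx : V.starProjection x ≠ 0) :
    sliceMap V x ⁻¹' (sphere 0 1 ∩ AffineSubspace.mk' x V) = sphere 0 1 ∩ V := by
  ext y
  rw [Set.mem_preimage, Set.mem_inter_iff, Set.mem_inter_iff, SetLike.mem_coe, SetLike.mem_coe,
    sliceMap_mem_mk'_iff hx, mem_sphere_zero_iff_norm, mem_sphere_zero_iff_norm]
  refine and_congr_left fun hy => ⟨fun h => ?_, fun hy1 => (norm_sliceMap hy hy1 x).trans hx1⟩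
  have hsq := norm_sliceMap_sq hy x
  have hpyth := V.norm_sq_eq_add_norm_sq_starProjection x
  rw [Submodule.starProjection_orthogonal_val] at hpyth
  have : ‖V.starProjection x‖ ^ 2 * ‖y‖ ^ 2 = ‖V.starProjection x‖ ^ 2 * 1 := by
    rw [h] at hsq; rw [hx1] at hpyth; linarith
  exact (pow_eq_one_iff_of_nonneg (norm_nonneg _) two_ne_zero).1
    (mul_left_cancel₀ (by positivity) this)

lemma sliceMap_eq_comp (x : E) :
    sliceMap V x = IsometryEquiv.addRight (x - V.starProjection x) ∘
      AffineMap.homothety (0 : E) ‖V.starProjection x‖ := by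
  ext y
  simp [sliceMap, AffineMap.homothety_apply]

variable [MeasurableSpace E] [BorelSpace E] {μ ν : Measure E}

lemma map_sliceMap_hausdorffMeasure {x : E} (hx : V.starProjection x ≠ 0) {s : ℝ} (hs : 0 ≤ s) :
    (μH[s] : Measure E).map (sliceMap V x) = ‖V.starProjection x‖₊⁻¹ ^ s • μH[s] := by
  rw [sliceMap_eq_comp, ← Measure.map_map (IsometryEquiv.continuous _).measurable
    (AffineMap.homothety_continuous _ _).measurable,
    map_homothety_hausdorffMeasure hs _ (norm_ne_zero_iff.2 hx), Measure.map_smul,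
    ((IsometryEquiv.addRight _).measurePreserving_hausdorffMeasure s).map_eq, nnnorm_norm]

lemma measurableEmbedding_sliceMap {x : E} (hx : V.starProjection x ≠ 0) :
    MeasurableEmbedding (sliceMap V x) :=
  ((Homeomorph.smulOfNeZero _ (norm_ne_zero_iff.2 hx)).trans
    (Homeomorph.addRight (x - V.starProjection x))).measurableEmbedding

lemma setIntegral_sphere_sliceMap {H : Type*} [NormedAddCommGroup H] [NormedSpace ℝ H] {x : E}
    (hx1 : ‖x‖ = 1) (hx : V.starProjection x ≠ 0) {s : ℝ} (hs : 0 ≤ s) (f : E → H) :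
    ∫ y in sphere 0 1 ∩ V, f (sliceMap V x y) ∂μH[s] =
      (‖V.starProjection x‖⁻¹ ^ s) • ∫ z in sphere 0 1 ∩ AffineSubspace.mk' x V, f z ∂μH[s] := by
  rw [← sliceMap_preimage_sphere_inter hx1 hx,
    ← (measurableEmbedding_sliceMap hx).setIntegral_map, map_sliceMap_hausdorffMeasure hx hs,
    Measure.restrict_smul, integral_smul_nnreal_measure]
  rfl

lemma integral_cexp_inner_sliceMap_comm (hμV : ∀ᵐ y ∂μ, y ∈ V)
    (hμ : ∀ v ∈ V, MeasurePreserving (ℝ ∙ v)ᗮ.reflection μ μ) (x t : E) :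
    ∫ y, Complex.exp (⟪sliceMap V x y, t⟫_ℝ * Complex.I) ∂μ =
      ∫ y, Complex.exp (⟪sliceMap V t y, x⟫_ℝ * Complex.I) ∂μ := by
  have factor : ∀ x t : E, ∫ y, Complex.exp (⟪sliceMap V x y, t⟫_ℝ * Complex.I) ∂μ =
      charFun μ (‖V.starProjection x‖ • V.starProjection t) *
        Complex.exp (⟪x - V.starProjection x, t - V.starProjection t⟫_ℝ * Complex.I) := by
    intro x t
    rw [charFun_apply, ← integral_mul_const]
    refine integral_congr_ae ?_
    filter_upwards [hμV] with y hy
    rw [inner_sliceMap hy, Complex.ofReal_add, add_mul, Complex.exp_add]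
  have hnorm : ‖‖V.starProjection x‖ • V.starProjection t‖ =
      ‖‖V.starProjection t‖ • V.starProjection x‖ := by
    rw [norm_smul, norm_smul, norm_norm, norm_norm, mul_comm]
  rw [factor, factor, real_inner_comm, charFun_eq_of_measurePreserving_reflection hμ
    (V.smul_mem _ (Submodule.starProjection_apply_mem V t))
    (V.smul_mem _ (Submodule.starProjection_apply_mem V x))
    hnorm]

variable [SecondCountableTopology E] [CompleteSpace E] [IsFiniteMeasure μ] [IsFiniteMeasure ν]

theorem map_sliceMap_prod (hν : ∀ v, MeasurePreserving (ℝ ∙ v)ᗮ.reflection ν ν)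
    (hμV : ∀ᵐ y ∂μ, y ∈ V ∧ ‖y‖ = 1)
    (hμ : ∀ v ∈ V, MeasurePreserving (ℝ ∙ v)ᗮ.reflection μ μ) :
    (ν.prod μ).map (fun z => sliceMap V z.1 z.2) = μ Set.univ • ν := by
  have hμV' : ∀ᵐ y ∂μ, y ∈ V := hμV.mono fun y hy => hy.1
  have integrable_cexp : ∀ g : E × E → ℝ, Continuous g →
      Integrable (fun z => Complex.exp (g z * Complex.I)) (ν.prod μ) := fun g hg =>
    (integrable_const (1 : ℝ)).mono' (by fun_prop) (by simp [Complex.norm_exp_ofReal_mul_I])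
  have hcont := continuous_sliceMap (V := V)
  have : IsFiniteMeasure (μ Set.univ • ν) := ν.smul_finite (measure_ne_top μ _)
  refine Measure.ext_of_charFun (funext fun t => ?_)
  calc charFun ((ν.prod μ).map fun z => sliceMap V z.1 z.2) t
    _ = ∫ x, ∫ y, Complex.exp (⟪sliceMap V x y, t⟫_ℝ * Complex.I) ∂μ ∂ν := by
      rw [charFun_apply, integral_map hcont.aemeasurable (by fun_prop),
        integral_prod _ (integrable_cexp _ (by fun_prop))]
    _ = ∫ x, ∫ y, Complex.exp (⟪sliceMap V t y, x⟫_ℝ * Complex.I) ∂μ ∂ν := by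
      simp_rw [integral_cexp_inner_sliceMap_comm hμV' hμ _ t]
    _ = ∫ y, charFun ν (sliceMap V t y) ∂μ := by
      rw [integral_integral_swap (integrable_cexp (fun z => ⟪sliceMap V t z.2, z.1⟫_ℝ)
        (by unfold sliceMap; fun_prop))]
      simp_rw [charFun_apply, real_inner_comm]
    _ = ∫ _, charFun ν t ∂μ := by
      refine integral_congr_ae ?_
      filter_upwards [hμV] with y hy
      exact charFun_eq_of_measurePreserving_reflection (V := ⊤) (fun v _ => hν v)
        Submodule.mem_top Submodule.mem_top (norm_sliceMap hy.1 hy.2 t)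
    _ = charFun (μ Set.univ • ν) t := by
      rw [integral_const, charFun_apply, charFun_apply, integral_smul_measure]
      rfl

theorem integral_integral_sliceMap (hν : ∀ v, MeasurePreserving (ℝ ∙ v)ᗮ.reflection ν ν)
    (hμV : ∀ᵐ y ∂μ, y ∈ V ∧ ‖y‖ = 1)
    (hμ : ∀ v ∈ V, MeasurePreserving (ℝ ∙ v)ᗮ.reflection μ μ)
    {H : Type*} [NormedAddCommGroup H] [NormedSpace ℝ H] [SecondCountableTopology H]
    [MeasurableSpace H] [BorelSpace H] (φ : E →ᵇ H) :
    ∫ x, ∫ y, φ (sliceMap V x y) ∂μ ∂ν = μ.real Set.univ • ∫ x, φ x ∂ν := by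
  have hcont := continuous_sliceMap (V := V)
  have hint : Integrable (fun z : E × E => φ (sliceMap V z.1 z.2)) (ν.prod μ) :=
    (φ.compContinuous ⟨_, hcont⟩).integrable _
  rw [← integral_prod _ hint, ← integral_map hcont.aemeasurable (by fun_prop),
    map_sliceMap_prod hν hμV hμ, integral_smul_measure]
  rfl

end Averaging

section FourierUniqueness

open scoped BoundedContinuousFunction NNReal
open BoundedContinuousFunction (innerProbChar)

variable {X F : Type*} [TopologicalSpace X] [MeasurableSpace X] [OpensMeasurableSpace X]
  {ν : Measure X} [NormedAddCommGroup F] [MeasurableSpace F] [BorelSpace F]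
  [SecondCountableTopology F]

instance isFiniteMeasure_withDensity_boundedContinuous [IsFiniteMeasure ν] (h : X →ᵇ ℝ≥0) :
    IsFiniteMeasure (ν.withDensity fun x => h x) :=
  isFiniteMeasure_withDensity (h.lintegral_lt_top_of_nnreal _).ne

lemma integral_map_withDensity_boundedContinuous {H : Type*} [NormedAddCommGroup H]
    [NormedSpace ℝ H] (h : X →ᵇ ℝ≥0) {L : X → F} (hL : Continuous L) {G : F → H}
    (hG : Continuous G) :
    ∫ y, G y ∂(ν.withDensity fun x => h x).map L = ∫ x, (h x : ℝ) • G (L x) ∂ν := by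
  rw [integral_map hL.aemeasurable hG.aestronglyMeasurable,
    integral_withDensity_eq_integral_smul h.continuous.measurable]
  rfl

lemma integral_eq_sub_withDensity_nnrealPart {H : Type*} [NormedAddCommGroup H] [NormedSpace ℝ H]
    [IsFiniteMeasure ν] (f : X →ᵇ ℝ) {L : X → F} (hL : Continuous L) (G : F →ᵇ H) :
    ∫ x, f x • G (L x) ∂ν = ∫ y, G y ∂(ν.withDensity fun x => f.nnrealPart x).map L -
      ∫ y, G y ∂(ν.withDensity fun x => (-f).nnrealPart x).map L := by
  have integrable_part : ∀ h : X →ᵇ ℝ≥0, Integrable (fun x => (h x : ℝ) • G (L x)) ν := by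
    intro h
    refine (integrable_withDensity_iff_integrable_smul h.continuous.measurable).1 ?_
    exact Integrable.of_bound (G.continuous.aestronglyMeasurable.comp_measurable hL.measurable)
      ‖G‖ (ae_of_all _ fun x => G.norm_coe_le_norm _)
  rw [integral_map_withDensity_boundedContinuous _ hL G.continuous,
    integral_map_withDensity_boundedContinuous _ hL G.continuous,
    ← integral_sub (integrable_part _) (integrable_part _)]
  simp_rw [← sub_smul]
  congr! with x
  exact congrFun f.self_eq_nnrealPart_sub_nnrealPart_neg x

theorem integral_mul_comp_eq_zero_of_integral_innerProbChar [InnerProductSpace ℝ F]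
    [CompleteSpace F] [IsFiniteMeasure ν] {f : X →ᵇ ℝ} {L : X → F} (hL : Continuous L)
    (h : ∀ t, ∫ x, f x • innerProbChar t (L x) ∂ν = 0) (g : F →ᵇ ℝ) :
    ∫ x, f x * g (L x) ∂ν = 0 := by
  have hmap : (ν.withDensity fun x => f.nnrealPart x).map L =
      (ν.withDensity fun x => (-f).nnrealPart x).map L := by
    refine Measure.ext_of_charFun (funext fun t => ?_)
    rw [charFun_eq_integral_innerProbChar, charFun_eq_integral_innerProbChar, ← sub_eq_zero,
      ← integral_eq_sub_withDensity_nnrealPart f hL, h t]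
  simpa only [smul_eq_mul, hmap, sub_self] using
    integral_eq_sub_withDensity_nnrealPart (ν := ν) f hL g

end FourierUniqueness

section Kernel

open scoped BoundedContinuousFunction
open BoundedContinuousFunction (innerProbChar innerProbChar_apply)

lemma exists_boundedContinuous_eqOn_of_isCompact {X : Type*} [TopologicalSpace X] [T4Space X]
    {K : Set X} (hK : IsCompact K) {f : X → ℝ} (hf : ContinuousOn f K) :
    ∃ F : X →ᵇ ℝ, Set.EqOn F f K := by
  have := isCompact_iff_compactSpace.1 hK
  obtain ⟨F, -, hF⟩ := BoundedContinuousFunction.exists_norm_eq_domRestrict_eq_of_closed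
    (BoundedContinuousFunction.mkOfCompact ⟨_, hf.domRestrict⟩) hK.isClosed
  exact ⟨F, fun x hx => DFunLike.congr_fun hF ⟨x, hx⟩⟩

variable {E : Type*} [NormedAddCommGroup E] [InnerProductSpace ℝ E] [FiniteDimensional ℝ E]
  [MeasurableSpace E] [BorelSpace E]

lemma ae_starProjection_ne_zero {V : Submodule ℝ E} (hV : 1 < Module.finrank ℝ V) :
    ∀ᵐ x ∂sphereMeasure (⊤ : Submodule ℝ E), V.starProjection x ≠ 0 := by
  have hdim := V.finrank_add_finrank_orthogonal
  have hnull : sphereMeasure (⊤ : Submodule ℝ E) Vᗮ = 0 :=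
    sphereMeasure_submodule_eq_zero (by rw [finrank_top]; omega)
  filter_upwards [measure_eq_zero_iff_ae_notMem.1 hnull] with x hx h0
  exact hx ((Submodule.starProjection_apply_eq_zero_iff V).1 h0)

theorem integral_smul_eq_zero_of_forall_slice {V : Submodule ℝ E} (hV : 1 < Module.finrank ℝ V)
    {f : E →ᵇ ℝ}
    (hf : ∀ ζ : AffineSubspace ℝ E, ζ.direction = V → (∃ z ∈ ζ, ‖z‖ < 1) →
      ∫ x in sphere 0 1 ∩ (ζ : Set E), f x ∂μH[(Module.finrank ℝ V : ℝ) - 1] = 0)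
    {g : E →ᵇ ℂ} (hg : ∀ x y, y - x ∈ V → g y = g x) :
    ∫ x, f x • g x ∂sphereMeasure (⊤ : Submodule ℝ E) = 0 := by
  have hslice : ∀ᵐ x ∂sphereMeasure (⊤ : Submodule ℝ E),
      ∫ y, (f • g) (sliceMap V x y) ∂sphereMeasure V = 0 := by
    filter_upwards [ae_sphereMeasure ⊤, ae_starProjection_ne_zero hV] with x hx hPx
    have hconst : ∀ᵐ y ∂sphereMeasure V,
        (f • g) (sliceMap V x y) = f (sliceMap V x y) • g x := by
      filter_upwards [ae_sphereMeasure V] with y hy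
      exact congrArg (f (sliceMap V x y) • ·) (hg x _ ((sliceMap_mem_mk'_iff hPx).2 hy.1))
    have hcenter : x - V.starProjection x ∈ AffineSubspace.mk' x V := by
      rw [AffineSubspace.mem_mk', vsub_eq_sub, sub_sub_cancel_left]
      exact V.neg_mem (Submodule.starProjection_apply_mem V x)
    rw [integral_congr_ae hconst, integral_smul_const, sphereMeasure,
      setIntegral_sphere_sliceMap hx.2 hPx (by rify at hV; linarith),
      hf _ (AffineSubspace.direction_mk' x V)
        ⟨_, hcenter, norm_sub_starProjection_lt_one hx.2 hPx⟩, smul_zero, zero_smul]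
  have havg := integral_integral_sliceMap (V := V) (μ := sphereMeasure V)
    (fun v => measurePreserving_reflection_sphereMeasure (Submodule.mem_top (x := v)))
    (ae_sphereMeasure V) (fun v => measurePreserving_reflection_sphereMeasure) (f • g)
  rw [integral_eq_zero_of_ae hslice] at havg
  refine (smul_eq_zero.1 havg.symm).resolve_left ((measureReal_ne_zero_iff).2 ?_)
  exact sphereMeasure_univ_ne_zero (by rintro rfl; simp at hV)

theorem integral_smul_innerProbChar_eq_zero_of_forall_slice {k : ℕ} (hk : 1 < k)
    (hkE : k < Module.finrank ℝ E) {a : E} {f : E →ᵇ ℝ}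
    (hf : ∀ ζ : AffineSubspace ℝ E, Module.finrank ℝ ζ.direction = k → a ∈ ζ.direction →
      (∃ z ∈ ζ, ‖z‖ < 1) → ∫ x in sphere 0 1 ∩ (ζ : Set E), f x ∂μH[(k : ℝ) - 1] = 0)
    {w : E} (hw : w ∈ (ℝ ∙ a)ᗮ) :
    ∫ x, f x • innerProbChar w x ∂sphereMeasure (⊤ : Submodule ℝ E) = 0 := by
  have finrank_span_le (v : E) : Module.finrank ℝ (ℝ ∙ v) ≤ 1 :=
    (finrank_span_le_card _).trans (by simp)
  have haw : ℝ ∙ a ≤ (ℝ ∙ w)ᗮ := by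
    rw [Submodule.le_orthogonal_iff_le_orthogonal]
    exact (Submodule.span_singleton_le_iff_mem _ _).2 hw
  have hdim := (ℝ ∙ w).finrank_add_finrank_orthogonal
  obtain ⟨V, haV, hVw, rfl⟩ := exists_submodule_between haw ((finrank_span_le a).trans hk.le)
    (by linarith [finrank_span_le w])
  refine integral_smul_eq_zero_of_forall_slice hk
    (fun ζ hζ => hf ζ (by rw [hζ]) ?_) fun x y hxy => ?_
  · rw [hζ]
    exact haV (Submodule.mem_span_singleton_self a)
  · have hperp : ⟪y - x, w⟫_ℝ = 0 :=
      (Submodule.mem_orthogonal_singleton_iff_inner_left).1 (hVw hxy)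
    rw [inner_sub_left, sub_eq_zero] at hperp
    rw [innerProbChar_apply, innerProbChar_apply, hperp]

theorem eqOn_zero_of_integral_mul_self_eq_zero {V : Submodule ℝ E} {G : E →ᵇ ℝ}
    (h : ∫ x, G x * G x ∂sphereMeasure V = 0) : Set.EqOn G 0 (sphere 0 1 ∩ V) := by
  have hae := (integral_eq_zero_iff_of_nonneg (fun x => mul_self_nonneg (G x))
    ((G * G).integrable _)).1 h
  exact eqOn_sphere_of_ae_eq G.continuous continuous_zero (hae.mono fun x => mul_self_eq_zero.1)

theorem integral_mul_eq_zero_of_reflection_invariant {a : E} {f : E →ᵇ ℝ}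
    (hf : ∀ w ∈ (ℝ ∙ a)ᗮ, ∫ x, f x • innerProbChar w x ∂sphereMeasure (⊤ : Submodule ℝ E) = 0)
    {G : E →ᵇ ℝ} (hG : ∀ x, G ((ℝ ∙ a)ᗮ.reflection x) = G x) :
    ∫ x, f x * G x ∂sphereMeasure (⊤ : Submodule ℝ E) = 0 := by
  obtain ⟨g, hg⟩ := exists_boundedContinuous_comp_starProjection_eq hG
  have hf_comp : ∫ x, f x * g ((ℝ ∙ a)ᗮ.starProjection x) ∂sphereMeasure (⊤ : Submodule ℝ E) =
      0 := by
    refine integral_mul_comp_eq_zero_of_integral_innerProbChar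
      (ℝ ∙ a)ᗮ.starProjection.continuous (fun t => ?_) g
    simpa only [innerProbChar_apply, Submodule.inner_starProjection_left_eq_right] using
      hf _ (Submodule.starProjection_apply_mem _ t)
  rw [← hf_comp]
  exact integral_congr_ae ((ae_sphereMeasure ⊤).mono fun x hx => by simp only [hg x hx.2])

theorem eqOn_neg_of_integral_smul_innerProbChar_eq_zero {a : E} {f : E →ᵇ ℝ}
    (hf : ∀ w ∈ (ℝ ∙ a)ᗮ, ∫ x, f x • innerProbChar w x ∂sphereMeasure (⊤ : Submodule ℝ E) = 0) :
    ∀ x ∈ sphere (0 : E) 1, f ((ℝ ∙ a)ᗮ.reflection x) = -f x := by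
  set ν := sphereMeasure (⊤ : Submodule ℝ E)
  set R := (ℝ ∙ a)ᗮ.reflection with hR
  set fR : E →ᵇ ℝ := f.compContinuous ⟨R, R.continuous⟩
  set G : E →ᵇ ℝ := f + fR
  have hGR : ∀ x, G (R x) = G x := fun x => by
    change f (R x) + f (R (R x)) = f x + f (R x)
    rw [hR, Submodule.reflection_reflection, add_comm]
  have integral_f_mul : ∫ x, f x * G x ∂ν = 0 :=
    integral_mul_eq_zero_of_reflection_invariant hf hGR
  have integral_fR_mul : ∫ x, fR x * G x ∂ν = 0 := by
    have hRν : MeasurePreserving R ν ν :=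
      measurePreserving_reflection_sphereMeasure Submodule.mem_top
    rw [← integral_f_mul, ← hRν.integral_comp R.toHomeomorph.measurableEmbedding fun x => f x * G x]
    simp_rw [hGR]
    rfl
  have integral_G_mul : ∫ x, G x * G x ∂ν = 0 :=
    calc ∫ x, G x * G x ∂ν
      _ = ∫ x, (f x * G x + fR x * G x) ∂ν := integral_congr_ae (ae_of_all _ fun x => add_mul _ _ _)
      _ = ∫ x, f x * G x ∂ν + ∫ x, fR x * G x ∂ν :=
        integral_add ((f * G).integrable _) ((fR * G).integrable _)
      _ = 0 := by rw [integral_f_mul, integral_fR_mul, add_zero]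
  intro x hx
  exact eq_neg_of_add_eq_zero_right
    (eqOn_zero_of_integral_mul_self_eq_zero integral_G_mul ⟨hx, Submodule.mem_top⟩)

lemma setIntegral_sphere_eq_zero_of_reflection {ζ : AffineSubspace ℝ E} {a : E}
    (ha : a ∈ ζ.direction) {f : E → ℝ}
    (hf : ∀ x ∈ sphere (0 : E) 1, f ((ℝ ∙ a)ᗮ.reflection x) = -f x) (s : ℝ) :
    ∫ x in sphere 0 1 ∩ (ζ : Set E), f x ∂μH[s] = 0 := by
  have hinv := (measurePreserving_reflection_restrict_sphere_inter ha s).integral_comp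
    (ℝ ∙ a)ᗮ.reflection.toHomeomorph.measurableEmbedding f
  rw [setIntegral_congr_fun (isClosed_sphere_inter_affineSubspace ζ).measurableSet
    fun x hx => hf x hx.1, integral_neg] at hinv
  exact self_eq_neg.1 hinv.symm

theorem statement1_general {k : ℕ} (hk : 1 < k) (hkE : k < Module.finrank ℝ E) (a : E)
    {f : E → ℝ} (hf : ContinuousOn f (sphere 0 1)) :
    (∀ ζ : AffineSubspace ℝ E, Module.finrank ℝ ζ.direction = k → a ∈ ζ.direction →
        (∃ z ∈ ζ, ‖z‖ < 1) → ∫ x in sphere 0 1 ∩ (ζ : Set E), f x ∂μH[(k : ℝ) - 1] = 0) ↔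
      ∀ x ∈ sphere (0 : E) 1, f ((ℝ ∙ a)ᗮ.reflection x) = -f x := by
  refine ⟨fun hslice x hx => ?_, fun hodd ζ _ ha _ =>
    setIntegral_sphere_eq_zero_of_reflection ha hodd _⟩
  obtain ⟨F, hF⟩ := exists_boundedContinuous_eqOn_of_isCompact (isCompact_sphere _ _) hf
  have hFslice : ∀ ζ : AffineSubspace ℝ E, Module.finrank ℝ ζ.direction = k → a ∈ ζ.direction →
      (∃ z ∈ ζ, ‖z‖ < 1) → ∫ x in sphere 0 1 ∩ (ζ : Set E), F x ∂μH[(k : ℝ) - 1] = 0 := by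
    intro ζ hζ ha hball
    rw [← hslice ζ hζ ha hball]
    exact setIntegral_congr_fun (isClosed_sphere_inter_affineSubspace ζ).measurableSet
      (hF.mono Set.inter_subset_left)
  have hRx : (ℝ ∙ a)ᗮ.reflection x ∈ sphere (0 : E) 1 := by simpa using hx
  rw [← hF hx, ← hF hRx]
  exact eqOn_neg_of_integral_smul_innerProbChar_eq_zero
    (fun w => integral_smul_innerProbChar_eq_zero_of_forall_slice hk hkE hFslice) x hx

end Kernel

lemma reflMap_eq_reflection {n : ℕ} (a x : Euc (n + 1)) :
    reflMap a x = (ℝ ∙ a)ᗮ.reflection x := by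
  rw [Submodule.reflection_orthogonal_apply, Submodule.reflection_singleton_apply, reflMap,
    neg_sub, real_inner_comm, two_smul, ← add_smul, RCLike.ofReal_real_eq_id, id_eq, two_mul,
    add_div]

/-- Kernel of the parallel slice transform: for `f` continuous on `S^n`,
the integrals of `f` over all sections of `S^n` by `k`-planes parallel to `a` and meeting
the open unit ball vanish iff `f ∘ R_a = −f` on `S^n`. -/
theorem statement1 (n k : ℕ) (hn : 2 ≤ n) (hk : 1 < k) (hkn : k ≤ n)
    (a : Euc (n + 1)) (ha : a ≠ 0)
    (f : Euc (n + 1) → ℝ)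
    (hf : ContinuousOn f (sphere (0 : Euc (n + 1)) 1)) :
    (∀ ζ : AffineSubspace ℝ (Euc (n + 1)),
        Module.finrank ℝ ζ.direction = k → a ∈ ζ.direction →
        (∃ z ∈ ζ, ‖z‖ < 1) →
        (∫ x in sphere (0 : Euc (n + 1)) 1 ∩ (ζ : Set (Euc (n + 1))),
          f x ∂μH[(k : ℝ) - 1]) = 0) ↔
      ∀ x ∈ sphere (0 : Euc (n + 1)) 1, f (reflMap a x) = -f x := by
  simp_rw [reflMap_eq_reflection]
  exact statement1_general hk (by rw [finrank_euclideanSpace_fin]; omega) a hf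
end

section
/- Let n ≥ 1, let k be an integer with 1 < k ≤ n, and let a ∈ ℝ^{n+1} with |a| > 1. Define, for a function f on S^n, (W_a f)(x) = ρ_{a*}(x) f(τ_a x), where ρ_{a*}(x) = ( (|a|² − 1)/|a − x|² )^{k−1} and τ_a x = ((|a|² − 1) x + 2(1 − x·a) a)/|x − a|². Then W_a is an involution: (W_a (W_a f))(x) = f(x) for every f : S^n → ℝ and every x ∈ S^n. -/
open MeasureTheory Metric Matrix
open scoped InnerProductSpace ENNReal

/-- `(W_a f)(x) = ρ_{a*}(x) f(τ_a x)` with `ρ_{a*}(x) = ((|a|²−1)/|a−x|²)^{k−1}`. -/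
noncomputable def Wop {n : ℕ} (k : ℕ) (a : Euc (n + 1)) (f : Euc (n + 1) → ℝ)
    (x : Euc (n + 1)) : ℝ :=
  ((‖a‖ ^ 2 - 1) / ‖a - x‖ ^ 2) ^ (k - 1) * f (tauMap a x)

/-!
For `x` on a sphere `s` and `a` off it, the second point `y` at which the line through `a` and `x`
meets `s` satisfies `y - a = c(x) (x - a)`, where `c(x)` is the power of `a` divided by
`|x - a|²`. The line through `a` and `y` is the same line, so `x ↦ y` is an involution of `s`.
Following `x` to `y` and back then scales `x - a` by `c(y) c(x)`, hence `c(y) c(x) = 1` and the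
weights of the operator cancel.
-/

section SecantMap

open EuclideanGeometry

variable {V P E : Type*} [NormedAddCommGroup V] [InnerProductSpace ℝ V] [MetricSpace P]
  [NormedAddTorsor V P] [MulAction ℝ E] {s : Sphere P} {a x : P}

/-- The second point at which the line through `a` and the point `x` of `s` meets `s`; it is `x`
itself when that line is tangent to `s` or `x = a`. -/
noncomputable def secantMap (s : Sphere P) (a x : P) : P := s.secondInter x (x -ᵥ a)

/-- The power of `a` with respect to `s` over `|x - a|²`: for `x ∈ s`, the ratio of the homothety
centred at `a` that carries `x` to `secantMap s a x`. -/
noncomputable def secantRatio (s : Sphere P) (a x : P) : ℝ := s.power a / dist x a ^ 2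

/-- The operator `f ↦ c ^ m • (f ∘ τ)`, where `τ` is the secant map and `c` the secant ratio. For
the unit sphere and `m = k - 1` this is the paper's `W_a`. -/
noncomputable def secantOperator (s : Sphere P) (a : P) (m : ℕ) (f : P → E) (x : P) : E :=
  secantRatio s a x ^ m • f (secantMap s a x)

lemma secantMap_mem (a : P) (hx : x ∈ s) : secantMap s a x ∈ s :=
  (Sphere.secondInter_mem _).2 hx

lemma secantMap_vsub (a : P) (hx : x ∈ s) :
    secantMap s a x -ᵥ a = secantRatio s a x • (x -ᵥ a) := by
  rcases eq_or_ne x a with rfl | hxa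
  · simp [secantMap]
  have hdist : ‖x -ᵥ a‖ ≠ 0 := norm_ne_zero_iff.2 (vsub_ne_zero.2 hxa)
  have hpower : s.power a = ‖x -ᵥ a‖ ^ 2 - 2 * ⟪x -ᵥ a, x -ᵥ s.center⟫_ℝ := by
    rw [Sphere.power, ← EuclideanGeometry.mem_sphere.1 hx, dist_eq_norm_vsub V, dist_eq_norm_vsub V,
      ← vsub_sub_vsub_cancel_left a s.center x, norm_sub_sq_real, real_inner_comm]
    ring
  rw [secantMap, Sphere.secondInter, vadd_vsub_assoc, secantRatio, hpower,
    real_inner_self_eq_norm_sq, dist_eq_norm_vsub V]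
  match_scalars
  field_simp
  ring

lemma secantRatio_ne_zero (hx : x ∈ s) (ha : a ∉ s) : secantRatio s a x ≠ 0 := by
  have hxa : x ≠ a := ne_of_mem_of_not_mem hx ha
  have hpower : s.power a ≠ 0 :=
    (Sphere.power_eq_zero_iff_mem_sphere (Sphere.radius_nonneg_of_mem hx)).not.2 ha
  exact div_ne_zero hpower (pow_ne_zero 2 (dist_ne_zero.2 hxa))

lemma secantMap_secantMap (hx : x ∈ s) (ha : a ∉ s) :
    secantMap s a (secantMap s a x) = x := by
  rw [secantMap, secantMap_vsub a hx, Sphere.secondInter_smul _ _ _ (secantRatio_ne_zero hx ha),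
    secantMap, Sphere.secondInter_secondInter]

lemma secantRatio_mul_secantRatio_secantMap (hx : x ∈ s) (ha : a ∉ s) :
    secantRatio s a x * secantRatio s a (secantMap s a x) = 1 := by
  have hne : x -ᵥ a ≠ 0 := vsub_ne_zero.2 (ne_of_mem_of_not_mem hx ha)
  have hreturn : x -ᵥ a =
      (secantRatio s a x * secantRatio s a (secantMap s a x)) • (x -ᵥ a) := by
    have hback := secantMap_vsub a (secantMap_mem a hx)
    rwa [secantMap_secantMap hx ha, secantMap_vsub a hx, smul_smul, mul_comm] at hback
  exact smul_left_injective ℝ hne (hreturn.symm.trans (one_smul ℝ _).symm)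

theorem statement7_general (m : ℕ) (f : P → E) (hx : x ∈ s) (ha : a ∉ s) :
    secantOperator s a m (secantOperator s a m f) x = f x := by
  rw [secantOperator, secantOperator, smul_smul, ← mul_pow,
    secantRatio_mul_secantRatio_secantMap hx ha, one_pow, one_smul, secantMap_secantMap hx ha]

end SecantMap

section UnitSphere

open EuclideanGeometry

/-- The unit sphere of `ℝ^m`, as an `EuclideanGeometry.Sphere`. -/
def unitSphere (m : ℕ) : Sphere (Euc m) := ⟨0, 1⟩

variable {n : ℕ} {a x : Euc (n + 1)}

lemma mem_unitSphere {m : ℕ} {x : Euc m} : x ∈ unitSphere m ↔ ‖x‖ = 1 := mem_sphere_zero_iff_norm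

lemma secantRatio_unitSphere (a x : Euc (n + 1)) :
    secantRatio (unitSphere (n + 1)) a x = (‖a‖ ^ 2 - 1) / ‖a - x‖ ^ 2 := by
  simp [secantRatio, Sphere.power, unitSphere, dist_eq_norm, norm_sub_rev x a]

lemma tauMap_eq_secantMap (hx : x ∈ unitSphere (n + 1)) (hxa : x ≠ a) :
    tauMap a x = secantMap (unitSphere (n + 1)) a x := by
  have hdist : ‖x - a‖ ≠ 0 := norm_ne_zero_iff.2 (sub_ne_zero.2 hxa)
  have hnorm : ‖x‖ = 1 := mem_unitSphere.1 hx
  have hpower : ‖a‖ ^ 2 - 1 = ‖x - a‖ ^ 2 - 2 * (1 - ⟪x, a⟫_ℝ) := by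
    rw [norm_sub_sq_real, hnorm]
    ring
  have hinner : ⟪x - a, x⟫_ℝ = 1 - ⟪x, a⟫_ℝ := by
    rw [inner_sub_left, real_inner_self_eq_norm_sq, hnorm, real_inner_comm, one_pow]
  simp only [tauMap, secantMap, Sphere.secondInter, unitSphere, vsub_eq_sub, vadd_eq_add, sub_zero,
    real_inner_self_eq_norm_sq, hinner, hpower]
  match_scalars
  · field_simp
    ring
  · field_simp

lemma Wop_eq_secantOperator (k : ℕ) (f : Euc (n + 1) → ℝ) (hx : x ∈ unitSphere (n + 1))
    (hxa : x ≠ a) : Wop k a f x = secantOperator (unitSphere (n + 1)) a (k - 1) f x := by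
  rw [Wop, secantOperator, secantRatio_unitSphere, tauMap_eq_secantMap hx hxa, smul_eq_mul]

lemma Wop_Wop_eq_secantOperator_secantOperator (k : ℕ) (f : Euc (n + 1) → ℝ)
    (hx : x ∈ unitSphere (n + 1)) (ha : a ∉ unitSphere (n + 1)) :
    Wop k a (Wop k a f) x =
      secantOperator (unitSphere (n + 1)) a (k - 1)
        (secantOperator (unitSphere (n + 1)) a (k - 1) f) x := by
  have hy := secantMap_mem a hx
  rw [Wop_eq_secantOperator k _ hx (ne_of_mem_of_not_mem hx ha)]
  exact congrArg (secantRatio (unitSphere (n + 1)) a x ^ (k - 1) • ·)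
    (Wop_eq_secantOperator k f hy (ne_of_mem_of_not_mem hy ha))

end UnitSphere

/-- Lemma 5.2: `W_a` is an involution on functions on `S^n`:
`W_a(W_a f) = f` pointwise on the sphere. -/
theorem statement7 (n k : ℕ) (hn : 1 ≤ n) (hk1 : 1 < k) (hkn : k ≤ n)
    (a : Euc (n + 1)) (ha : 1 < ‖a‖)
    (f : Euc (n + 1) → ℝ) :
    ∀ x ∈ sphere (0 : Euc (n + 1)) 1, Wop k a (Wop k a f) x = f x := by
  intro x hx
  have hx' : x ∈ unitSphere (n + 1) := mem_unitSphere.2 (mem_sphere_zero_iff_norm.1 hx)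
  have ha' : a ∉ unitSphere (n + 1) := mem_unitSphere.not.2 ha.ne'
  rw [Wop_Wop_eq_secantOperator_secantOperator k f hx' ha', statement7_general (k - 1) f hx' ha']
end
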